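/- Let f : ℝⁿ → ℝⁿ be continuously differentiable, F : ℝᵐ ⇉ ℝᵐ a set-valued map with closed graph, B an injective n×m real matrix and C a surjective m×n real matrix. Define Φ(z) = f(z) + B F(Cz) and the solution mapping S(p) = { z : p ∈ Φ(z) }. Let (z̄, p̄) ∈ gph Φ and set v̄ = (BᵀB)⁻¹Bᵀ(p̄ − f(z̄)). Then S has the Aubin property at p̄ for z̄ if and only if the implication [((CCᵀ)⁻¹C ∇f(z̄)ᵀ ξ, Bᵀ ξ) ∈ −N((Cz̄, v̄); gph F) and ∇f(z̄)ᵀ ξ ∈ rge Cᵀ ⟹ ξ = 0] holds. -/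

import Mathlib

open Filter Topology Set Metric RealInnerProductSpace
open scoped ENNReal NNReal Pointwise

noncomputable section

/-- Graph of a set-valued map. -/
def svGraph {α β : Type*} (F : α → Set β) : Set (α × β) := {p | p.2 ∈ F p.1}

/-- Inverse of a set-valued map. -/
def svInv {α β : Type*} (F : α → Set β) : β → Set α := fun y => {x | y ∈ F x}

/-- Local closedness of a set at a point of a metric space. -/
def LocClosedAt {α : Type*} [PseudoMetricSpace α] (s : Set α) (p : α) : Prop :=
  ∃ r : ℝ, 0 < r ∧ IsClosed (s ∩ Metric.closedBall p r)

section Cones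

variable {X : Type*} [NormedAddCommGroup X] [NormedSpace ℝ X]

/-- Bouligand-Severi contingent cone. -/
def contingentCone (Ω : Set X) (x : X) : Set X :=
  { u | ∃ (t : ℕ → ℝ) (uk : ℕ → X), (∀ k, 0 < t k) ∧
      Tendsto t atTop (𝓝 0) ∧ Tendsto uk atTop (𝓝 u) ∧ ∀ k, x + t k • uk k ∈ Ω }

/-- Bouligand paratingent cone. -/
def paratingentCone (Ω : Set X) (x : X) : Set X :=
  { u | ∃ (t : ℕ → ℝ) (uk : ℕ → X) (xk : ℕ → X), (∀ k, 0 < t k) ∧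
      Tendsto t atTop (𝓝 0) ∧ Tendsto uk atTop (𝓝 u) ∧
      (∀ k, xk k ∈ Ω) ∧ Tendsto xk atTop (𝓝 x) ∧ ∀ k, xk k + t k • uk k ∈ Ω }

end Cones

section NormalCones

variable {X : Type*} [NormedAddCommGroup X] [InnerProductSpace ℝ X]

/-- Fréchet (regular) normal cone. -/
def frechetNormalCone (Ω : Set X) (x : X) : Set X :=
  { v | ∀ ε : ℝ, 0 < ε → ∃ δ : ℝ, 0 < δ ∧ ∀ y ∈ Ω, ‖y - x‖ < δ →
      ⟪v, y - x⟫ ≤ ε * ‖y - x‖ }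

/-- Limiting (Mordukhovich) normal cone. -/
def limitingNormalCone (Ω : Set X) (x : X) : Set X :=
  { v | ∃ (xk : ℕ → X) (vk : ℕ → X), (∀ k, xk k ∈ Ω) ∧
      Tendsto xk atTop (𝓝 x) ∧ Tendsto vk atTop (𝓝 v) ∧
      ∀ k, vk k ∈ frechetNormalCone Ω (xk k) }

end NormalCones

section Derivatives

variable {E F : Type*} [NormedAddCommGroup E] [NormedSpace ℝ E]
  [NormedAddCommGroup F] [NormedSpace ℝ F]

/-- Graphical derivative. -/
def gDeriv (Fm : E → Set F) (x : E) (y : F) : E → Set F := fun u =>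
  {v | (u, v) ∈ contingentCone (svGraph Fm) (x, y)}

/-- Strict graphical derivative. -/
def sgDeriv (Fm : E → Set F) (x : E) (y : F) : E → Set F := fun u =>
  {v | (u, v) ∈ paratingentCone (svGraph Fm) (x, y)}

end Derivatives

section Coderivative

variable {E F : Type*} [NormedAddCommGroup E] [InnerProductSpace ℝ E]
  [NormedAddCommGroup F] [InnerProductSpace ℝ F]

/-- Coderivative: `w ∈ D*F(x|y)(z)` iff `(w, -z)` is in the limiting normal cone
to the graph of `F` (viewed inside the `ℓ²` product) at `(x, y)`. -/
def coDeriv (Fm : E → Set F) (x : E) (y : F) : F → Set E := fun z =>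
  { w | (WithLp.equiv 2 (E × F)).symm (w, -z) ∈
      limitingNormalCone ((WithLp.equiv 2 (E × F)).symm '' svGraph Fm)
        ((WithLp.equiv 2 (E × F)).symm (x, y)) }

end Coderivative

section Norms

variable {E F : Type*} [NormedAddCommGroup E] [NormedAddCommGroup F]

/-- Outer norm of a (positively homogeneous) set-valued map. -/
def outerNormSV (H : E → Set F) : ℝ≥0∞ :=
  ⨆ (x : E) (_ : ‖x‖ ≤ 1) (y : F) (_ : y ∈ H x), (‖y‖₊ : ℝ≥0∞)

/-- Inner norm of a (positively homogeneous) set-valued map. -/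
def innerNormSV (H : E → Set F) : ℝ≥0∞ :=
  ⨆ (x : E) (_ : ‖x‖ ≤ 1), ⨅ (y : F) (_ : y ∈ H x), (‖y‖₊ : ℝ≥0∞)

/-- Positive homogeneity of a set-valued map. -/
def PosHomogeneous {E F : Type*} [NormedAddCommGroup E] [NormedSpace ℝ E]
    [NormedAddCommGroup F] [NormedSpace ℝ F] (H : E → Set F) : Prop :=
  (0 : F) ∈ H 0 ∧ ∀ (c : ℝ), 0 < c → ∀ x, H (c • x) = c • (H x)

end Norms

section Stability

variable {E F : Type*} [NormedAddCommGroup E] [NormedAddCommGroup F]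

/-- Metric regularity with constant `κ`. -/
def MetrRegWith (κ : ℝ≥0) (Fm : E → Set F) (xbar : E) (ybar : F) : Prop :=
  ∃ U ∈ 𝓝 xbar, ∃ V ∈ 𝓝 ybar, ∀ x ∈ U, ∀ y ∈ V,
    EMetric.infEdist x (svInv Fm y) ≤ (κ : ℝ≥0∞) * EMetric.infEdist y (Fm x)

/-- The regularity modulus `reg (F; xbar|ybar)`. -/
def regMod (Fm : E → Set F) (xbar : E) (ybar : F) : ℝ≥0∞ :=
  ⨅ (κ : ℝ≥0) (_ : MetrRegWith κ Fm xbar ybar), (κ : ℝ≥0∞)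

/-- Aubin property with constant `κ`. -/
def AubinWith (κ : ℝ≥0) (S : F → Set E) (ybar : F) (xbar : E) : Prop :=
  ∃ V ∈ 𝓝 ybar, ∃ U ∈ 𝓝 xbar, ∀ y ∈ V, ∀ y' ∈ V, ∀ x ∈ S y' ∩ U,
    ∃ x' ∈ S y, ‖x - x'‖ ≤ (κ : ℝ) * ‖y - y'‖

/-- The Lipschitz modulus `lip (S; ybar|xbar)`. -/
def lipMod (S : F → Set E) (ybar : F) (xbar : E) : ℝ≥0∞ :=
  ⨅ (κ : ℝ≥0) (_ : AubinWith κ S ybar xbar), (κ : ℝ≥0∞)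

/-- Strong metric subregularity with constant `κ`. -/
def SubregWith (κ : ℝ≥0) (Fm : E → Set F) (xbar : E) (ybar : F) : Prop :=
  ∃ U ∈ 𝓝 xbar, ∀ x ∈ U, (‖x - xbar‖₊ : ℝ≥0∞) ≤ (κ : ℝ≥0∞) * EMetric.infEdist ybar (Fm x)

/-- The subregularity modulus `subreg (F; xbar|ybar)`. -/
def subregMod (Fm : E → Set F) (xbar : E) (ybar : F) : ℝ≥0∞ :=
  ⨅ (κ : ℝ≥0) (_ : SubregWith κ Fm xbar ybar), (κ : ℝ≥0∞)

/-- Isolated calmness with constant `κ`. -/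
def CalmWith (κ : ℝ≥0) (S : F → Set E) (ybar : F) (xbar : E) : Prop :=
  ∃ V ∈ 𝓝 ybar, ∃ U ∈ 𝓝 xbar, ∀ y ∈ V, ∀ x ∈ S y ∩ U, ‖x - xbar‖ ≤ (κ : ℝ) * ‖y - ybar‖

/-- The calmness modulus `clm (S; ybar|xbar)`. -/
def clmMod (S : F → Set E) (ybar : F) (xbar : E) : ℝ≥0∞ :=
  ⨅ (κ : ℝ≥0) (_ : CalmWith κ S ybar xbar), (κ : ℝ≥0∞)

/-- Strong metric regularity: metric regularity plus a single-valued localization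
of the inverse. -/
def StrongMetrReg (Fm : E → Set F) (xbar : E) (ybar : F) : Prop :=
  (∃ κ : ℝ≥0, MetrRegWith κ Fm xbar ybar) ∧
  ∃ U ∈ 𝓝 xbar, ∃ V ∈ 𝓝 ybar, ∀ y ∈ V, (svInv Fm y ∩ U).Subsingleton

end Stability

/-! The Aubin property of `S = Φ⁻¹` is characterised by the Mordukhovich criterion `0 ∈
D*Φ(z̄|p̄)(ξ) → ξ = 0`. By compactness of the unit sphere this is a uniform bound `‖ξ‖ ≤ κ ‖w‖` for
all `w ∈ D̂*Φ(ξ)` at nearby graph points. The Aubin property yields the bound by moving from a point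
of the graph in the direction `-ξ` and letting the preimage follow. Conversely, given `(x₀, y₀)` in
the graph and a nearby `y`, minimise `‖y' - y‖` plus a small quadratic penalty over the graph near
`(x₀, y₀)`: if the minimiser does not reach `y`, Fermat's rule there provides a coderivative element
violating the bound, and otherwise the penalty bounds its distance to `x₀`.

For `Φ = f + B F(C ·)` the coderivative is computed exactly, `D*Φ(z̄|p̄)(ξ) = ∇f(z̄)ᵀ ξ + Cᵀ
D*F(Cz̄|v̄)(Bᵀ ξ)`, since shearing by `f`, the left inverse `(BᵀB)⁻¹Bᵀ` of `B` and the right inverse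
of `C` adjoint to `(CCᵀ)⁻¹C` transport Fréchet normals in both directions. As `(CCᵀ)⁻¹C` is a left
inverse of `Cᵀ`, zero lies in this set exactly when `∇f(z̄)ᵀ ξ ∈ rge Cᵀ` and `-(CCᵀ)⁻¹C ∇f(z̄)ᵀ ξ ∈
D*F(Cz̄|v̄)(Bᵀ ξ)`. -/

section NormalConeCalculus

variable {X Y : Type*} [NormedAddCommGroup X] [InnerProductSpace ℝ X]
  [NormedAddCommGroup Y] [InnerProductSpace ℝ Y]

lemma mem_frechetNormalCone_iff_eventually {Ω : Set X} {x v : X} :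
    v ∈ frechetNormalCone Ω x ↔
      ∀ ε : ℝ, 0 < ε → ∀ᶠ y in 𝓝[Ω] x, ⟪v, y - x⟫ ≤ ε * ‖y - x‖ := by
  simp only [frechetNormalCone, mem_ofPred_eq, eventually_nhdsWithin_iff,
    Metric.eventually_nhds_iff, dist_eq_norm]
  refine forall₂_congr fun ε _ => exists_congr fun δ => and_congr_right fun _ => ?_
  exact ⟨fun h y hy hyΩ => h y hyΩ hy, fun h y hyΩ hy => h hy hyΩ⟩

lemma smul_mem_frechetNormalCone {Ω : Set X} {x v : X} (hv : v ∈ frechetNormalCone Ω x)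
    {c : ℝ} (hc : 0 < c) : c • v ∈ frechetNormalCone Ω x := by
  rw [mem_frechetNormalCone_iff_eventually] at hv ⊢
  intro ε hε
  filter_upwards [hv (ε / c) (div_pos hε hc)] with y hy
  calc ⟪c • v, y - x⟫ = c * ⟪v, y - x⟫ := real_inner_smul_left _ _ _
    _ ≤ c * (ε / c * ‖y - x‖) := by gcongr
    _ = ε * ‖y - x‖ := by field_simp

lemma inner_eq_zero_of_mem_frechetNormalCone_of_line {Ω : Set X} {x v h : X}
    (hv : v ∈ frechetNormalCone Ω x) (hline : ∀ t : ℝ, x + t • h ∈ Ω) : ⟪v, h⟫ = 0 := by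
  have inner_le_zero : ∀ {k : X}, (∀ t : ℝ, x + t • k ∈ Ω) → ⟪v, k⟫ ≤ 0 := by
    intro k hk
    have hlim : Tendsto (fun t : ℝ => x + t • k) (𝓝[>] 0) (𝓝[Ω] x) :=
      tendsto_nhdsWithin_of_tendsto_nhds_of_eventually_within _
        (((by fun_prop : Continuous fun t : ℝ => x + t • k).tendsto' 0 x (by simp)).mono_left
          nhdsWithin_le_nhds) (Eventually.of_forall hk)
    have hbound : ∀ ε : ℝ, 0 < ε → ⟪v, k⟫ ≤ ε * ‖k‖ := by
      intro ε hε
      obtain ⟨t, ht, ht0 : 0 < t⟩ :=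
        ((hlim.eventually (mem_frechetNormalCone_iff_eventually.1 hv ε hε)).and
          self_mem_nhdsWithin).exists
      rw [add_sub_cancel_left, real_inner_smul_right, norm_smul, Real.norm_of_nonneg ht0.le,
        mul_left_comm] at ht
      exact le_of_mul_le_mul_left ht ht0
    refine ge_of_tendsto (f := fun ε : ℝ => ε * ‖k‖) (x := 𝓝[>] 0) ?_
      (eventually_mem_nhdsWithin.mono hbound)
    exact ((continuous_mul_const ‖k‖).tendsto' 0 0 (zero_mul _)).mono_left nhdsWithin_le_nhds
  refine le_antisymm (inner_le_zero hline) ?_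
  have := inner_le_zero (k := -h) fun t => by simpa using hline (-t)
  rwa [inner_neg_right, neg_nonpos] at this

/- Only the values of `A` on displacements inside `Ω` matter, which lets `v` differ from the image
of `u` under the adjoint of `A`. -/
lemma mem_frechetNormalCone_of_mapsTo {Ω : Set X} {Ω' : Set Y} {Ψ : X → Y} {A : X →L[ℝ] Y}
    {x v : X} {u : Y} (hΨ : HasFDerivWithinAt Ψ A Ω x) (hmaps : MapsTo Ψ Ω Ω')
    (hu : u ∈ frechetNormalCone Ω' (Ψ x)) (huv : ∀ y ∈ Ω, ⟪v, y - x⟫ = ⟪u, A (y - x)⟫) :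
    v ∈ frechetNormalCone Ω x := by
  rw [mem_frechetNormalCone_iff_eventually] at hu ⊢
  intro ε hε
  obtain ⟨c, hc, hlip⟩ := hΨ.isBigO_sub.exists_pos
  have hnormal := (hΨ.continuousWithinAt.tendsto_nhdsWithin hmaps).eventually
    (hu (ε / (2 * c)) (by positivity))
  have herror := hΨ.isLittleO.def (c := ε / (2 * (‖u‖ + 1))) (by positivity)
  filter_upwards [hnormal, herror, hlip.bound, self_mem_nhdsWithin] with y hy hye hyl hyΩ
  have hrem : -⟪u, Ψ y - Ψ x - A (y - x)⟫ ≤ ε / 2 * ‖y - x‖ :=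
    calc -⟪u, Ψ y - Ψ x - A (y - x)⟫
        ≤ ‖u‖ * ‖Ψ y - Ψ x - A (y - x)‖ :=
          (neg_le_abs _).trans (abs_real_inner_le_norm _ _)
      _ ≤ (‖u‖ + 1) * (ε / (2 * (‖u‖ + 1)) * ‖y - x‖) := by gcongr; linarith
      _ = ε / 2 * ‖y - x‖ := by field_simp
  calc ⟪v, y - x⟫ = ⟪u, Ψ y - Ψ x⟫ + -⟪u, Ψ y - Ψ x - A (y - x)⟫ := by
        rw [huv y hyΩ, inner_sub_right u (Ψ y - Ψ x)]; ring
    _ ≤ ε / (2 * c) * (c * ‖y - x‖) + ε / 2 * ‖y - x‖ := by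
        refine add_le_add (hy.trans ?_) hrem
        gcongr
    _ = ε * ‖y - x‖ := by field_simp; ring

lemma neg_mem_frechetNormalCone_of_isLocalMinOn {Ω : Set X} {φ : X → ℝ} {x g : X}
    (hmin : IsLocalMinOn φ Ω x) (hφ : HasFDerivAt φ (innerSL ℝ g) x) :
    -g ∈ frechetNormalCone Ω x := by
  rw [mem_frechetNormalCone_iff_eventually]
  intro ε hε
  filter_upwards [hmin, nhdsWithin_le_nhds (hφ.isLittleO.def hε)] with y hy hye
  rw [innerSL_apply_apply, Real.norm_eq_abs] at hye
  rw [inner_neg_left]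
  linarith [(le_abs_self _).trans hye]

lemma mem_limitingNormalCone_iff_mem_closure {Ω : Set X} {x v : X} :
    v ∈ limitingNormalCone Ω x ↔
      (x, v) ∈ closure {p : X × X | p.1 ∈ Ω ∧ p.2 ∈ frechetNormalCone Ω p.1} := by
  rw [mem_closure_iff_seq_limit]
  constructor
  · rintro ⟨xk, vk, hΩ, hx, hv, hN⟩
    exact ⟨fun k => (xk k, vk k), fun k => ⟨hΩ k, hN k⟩, hx.prodMk_nhds hv⟩
  · rintro ⟨p, hp, hlim⟩
    exact ⟨fun k => (p k).1, fun k => (p k).2, fun k => (hp k).1,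
      (continuous_fst.tendsto _).comp hlim, (continuous_snd.tendsto _).comp hlim,
      fun k => (hp k).2⟩

end NormalConeCalculus

section L2Graph

variable {E F : Type*}

/-- The graph of a set-valued map inside the `ℓ²` product, where normal cones to it are taken. -/
def l2Graph (G : E → Set F) : Set (WithLp 2 (E × F)) :=
  (WithLp.equiv 2 (E × F)).symm '' svGraph G

lemma l2Graph_eq_preimage (G : E → Set F) : l2Graph G = WithLp.ofLp ⁻¹' svGraph G :=
  (WithLp.equiv 2 (E × F)).symm.image_eq_preimage_symm _

lemma mem_l2Graph {G : E → Set F} {p : WithLp 2 (E × F)} : p ∈ l2Graph G ↔ p.snd ∈ G p.fst := by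
  rw [l2Graph_eq_preimage]; rfl

end L2Graph

section FrechetCoderivative

variable {E F : Type*} [NormedAddCommGroup E] [InnerProductSpace ℝ E]
  [NormedAddCommGroup F] [InnerProductSpace ℝ F]

/-- The Fréchet (regular) coderivative of a set-valued map, with the sign convention of `coDeriv`,
which is its limiting version. -/
def frechetCoDeriv (G : E → Set F) (x : E) (y : F) : F → Set E := fun z =>
  {w | WithLp.toLp 2 (w, -z) ∈ frechetNormalCone (l2Graph G) (WithLp.toLp 2 (x, y))}

lemma smul_mem_frechetCoDeriv {G : E → Set F} {x w : E} {y z : F}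
    (hw : w ∈ frechetCoDeriv G x y z) {c : ℝ} (hc : 0 < c) :
    c • w ∈ frechetCoDeriv G x y (c • z) := by
  have := smul_mem_frechetNormalCone hw hc
  rwa [← WithLp.toLp_smul, Prod.smul_mk, smul_neg] at this

/-- The graph of the Fréchet coderivatives of `G` as points `((x, y), z, w)`; its closure is the
graph of the limiting coderivatives. -/
def frechetCoDerivGraph (G : E → Set F) : Set ((E × F) × (F × E)) :=
  {p | p.1 ∈ svGraph G ∧ p.2.2 ∈ frechetCoDeriv G p.1.1 p.1.2 p.2.1}

lemma mem_coDeriv_iff_mem_closure {G : E → Set F} {x w : E} {y z : F} :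
    w ∈ coDeriv G x y z ↔ ((x, y), z, w) ∈ closure (frechetCoDerivGraph G) := by
  change WithLp.toLp 2 (w, -z) ∈ limitingNormalCone (l2Graph G) (WithLp.toLp 2 (x, y)) ↔ _
  rw [mem_limitingNormalCone_iff_mem_closure]
  constructor <;> intro h
  · have hcont : Continuous fun p : WithLp 2 (E × F) × WithLp 2 (E × F) =>
        (p.1.ofLp, -p.2.ofLp.2, p.2.ofLp.1) := by fun_prop
    have := map_mem_closure (t := frechetCoDerivGraph G) hcont h fun p hp =>
      ⟨mem_l2Graph.1 hp.1, by rw [frechetCoDeriv, mem_ofPred_eq, neg_neg]; exact hp.2⟩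
    rwa [neg_neg] at this
  · have hcont : Continuous fun p : (E × F) × (F × E) =>
        (WithLp.toLp 2 p.1, WithLp.toLp 2 (p.2.2, -p.2.1)) := by fun_prop
    refine hcont.closure_preimage_subset _ (closure_mono (fun p hp => ?_) h)
    exact ⟨mem_l2Graph.2 hp.1, hp.2⟩

lemma mem_frechetCoDeriv_of_mapsTo {E' F' : Type*} [NormedAddCommGroup E'] [InnerProductSpace ℝ E']
    [NormedAddCommGroup F'] [InnerProductSpace ℝ F'] {G : E → Set F} {G' : E' → Set F'}
    {Ψ : E × F → E' × F'} {A : E × F →L[ℝ] E' × F'} {x w : E} {y z : F} {u : E'} {ζ : F'}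
    (hΨ : HasFDerivAt Ψ A (x, y)) (hmaps : MapsTo Ψ (svGraph G) (svGraph G'))
    (hu : u ∈ frechetCoDeriv G' (Ψ (x, y)).1 (Ψ (x, y)).2 ζ)
    (hw : ∀ q ∈ svGraph G, ⟪w, q.1 - x⟫ - ⟪z, q.2 - y⟫ =
      ⟪u, (A (q - (x, y))).1⟫ - ⟪ζ, (A (q - (x, y))).2⟫) :
    w ∈ frechetCoDeriv G x y z := by
  let e := WithLp.prodContinuousLinearEquiv 2 ℝ E F
  let e' := WithLp.prodContinuousLinearEquiv 2 ℝ E' F'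
  have hderiv : HasFDerivAt (e'.symm ∘ Ψ ∘ e) (e'.symm ∘L A ∘L e) (WithLp.toLp 2 (x, y)) :=
    e'.symm.hasFDerivAt.comp _ (hΨ.comp (WithLp.toLp 2 (x, y)) e.hasFDerivAt)
  refine mem_frechetNormalCone_of_mapsTo hderiv.hasFDerivWithinAt
    (fun p hp => mem_l2Graph.2 (hmaps (mem_l2Graph.1 hp))) hu fun p hp => ?_
  simpa [WithLp.prod_inner_apply, inner_neg_left, ← sub_eq_add_neg, e, e'] using
    hw p.ofLp (mem_l2Graph.1 hp)

end FrechetCoderivative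

lemma mem_closure_of_eventually_mapsTo {α β : Type*} [TopologicalSpace α] [TopologicalSpace β]
    {s : Set α} {t : Set β} {Θ : α → β} {a : α} (ha : a ∈ closure s) (hΘ : ContinuousAt Θ a)
    (hmaps : ∀ᶠ p in 𝓝 a, p ∈ s → Θ p ∈ t) : Θ a ∈ closure t := by
  rw [mem_closure_iff_frequently] at ha ⊢
  exact hΘ.tendsto.frequently ((ha.and_eventually hmaps).mono fun p hp => hp.2 hp.1)

lemma mem_coDeriv_of_eventually_mapsTo {E F E' F' : Type*}
    [NormedAddCommGroup E] [InnerProductSpace ℝ E] [NormedAddCommGroup F] [InnerProductSpace ℝ F]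
    [NormedAddCommGroup E'] [InnerProductSpace ℝ E']
    [NormedAddCommGroup F'] [InnerProductSpace ℝ F'] {G : E → Set F} {G' : E' → Set F'}
    {x w : E} {y z : F} {x' w' : E'} {y' z' : F'} (hw : w ∈ coDeriv G x y z)
    (Θ : (E × F) × (F × E) → (E' × F') × (F' × E')) (hΘ : ContinuousAt Θ ((x, y), z, w))
    (hΘ_eq : Θ ((x, y), z, w) = ((x', y'), z', w'))
    (hmaps : ∀ᶠ p in 𝓝 ((x, y), z, w), p ∈ frechetCoDerivGraph G → Θ p ∈ frechetCoDerivGraph G') :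
    w' ∈ coDeriv G' x' y' z' := by
  rw [mem_coDeriv_iff_mem_closure] at hw ⊢
  exact hΘ_eq ▸ mem_closure_of_eventually_mapsTo hw hΘ hmaps

section Postcomposition

open scoped InnerProduct

variable {E F F' : Type*} [NormedAddCommGroup E] [InnerProductSpace ℝ E]
  [NormedAddCommGroup F] [InnerProductSpace ℝ F] [CompleteSpace F]
  [NormedAddCommGroup F'] [InnerProductSpace ℝ F'] [CompleteSpace F']
  {G : E → Set F} {B : F →L[ℝ] F'} {Bl : F' →L[ℝ] F} {x w : E} {y : F} {ξ : F'}

lemma mem_frechetCoDeriv_image_iff (hB : Function.LeftInverse Bl B) :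
    w ∈ frechetCoDeriv (fun x => B '' G x) x (B y) ξ ↔ w ∈ frechetCoDeriv G x y ((B†) ξ) := by
  constructor <;> intro hw
  · refine mem_frechetCoDeriv_of_mapsTo (G' := fun x => B '' G x)
      ((ContinuousLinearMap.id ℝ E).prodMap B).hasFDerivAt
      (fun q hq => mem_image_of_mem B hq) hw fun q _ => ?_
    simp [ContinuousLinearMap.adjoint_inner_left]
  · refine mem_frechetCoDeriv_of_mapsTo (u := w) (ζ := (B†) ξ)
      ((ContinuousLinearMap.id ℝ E).prodMap Bl).hasFDerivAt ?_ (by simpa [hB y] using hw) ?_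
    · rintro ⟨x', _⟩ ⟨y', hy', rfl⟩
      simpa [svGraph, hB y'] using hy'
    · rintro ⟨x', _⟩ ⟨y', hy', rfl⟩
      simp [ContinuousLinearMap.adjoint_inner_left, hB y, hB y']

lemma mem_coDeriv_image_iff (hB : Function.LeftInverse Bl B) :
    w ∈ coDeriv (fun x => B '' G x) x (B y) ξ ↔ w ∈ coDeriv G x y ((B†) ξ) := by
  constructor <;> intro hw
  · refine mem_coDeriv_of_eventually_mapsTo hw (fun p => ((p.1.1, Bl p.1.2), (B†) p.2.1, p.2.2))
      (by fun_prop) (by simp [hB y]) (Eventually.of_forall ?_)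
    rintro ⟨⟨x', _⟩, ξ', w'⟩ ⟨⟨y', hy', rfl⟩, hw'⟩
    rw [hB y']
    exact ⟨hy', (mem_frechetCoDeriv_image_iff hB).1 hw'⟩
  · have hadj : ∀ ζ, (B†) ((Bl†) ζ) = ζ := fun ζ => ext_inner_right ℝ fun k => by
      rw [ContinuousLinearMap.adjoint_inner_left, ContinuousLinearMap.adjoint_inner_left, hB k]
    refine mem_coDeriv_of_eventually_mapsTo hw
      (fun p => ((p.1.1, B p.1.2), ξ + (Bl†) (p.2.1 - (B†) ξ), p.2.2)) (by fun_prop) (by simp)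
      (Eventually.of_forall fun p hp =>
        ⟨mem_image_of_mem B hp.1, (mem_frechetCoDeriv_image_iff hB).2 ?_⟩)
    rw [map_add, hadj, add_sub_cancel]
    exact hp.2

end Postcomposition

section Precomposition

open scoped InnerProduct

variable {E E' F : Type*} [NormedAddCommGroup E] [InnerProductSpace ℝ E] [CompleteSpace E]
  [NormedAddCommGroup E'] [InnerProductSpace ℝ E'] [CompleteSpace E']
  [NormedAddCommGroup F] [InnerProductSpace ℝ F]
  {G : E' → Set F} {C : E →L[ℝ] E'} {Cr : E' →L[ℝ] E} {x w : E} {y ξ : F}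

lemma adjoint_mem_frechetCoDeriv_comp {u : E'} (hu : u ∈ frechetCoDeriv G (C x) y ξ) :
    (C†) u ∈ frechetCoDeriv (fun x => G (C x)) x y ξ := by
  refine mem_frechetCoDeriv_of_mapsTo (C.prodMap (ContinuousLinearMap.id ℝ F)).hasFDerivAt
    (fun q hq => hq) hu fun q _ => ?_
  simp [ContinuousLinearMap.adjoint_inner_left]

lemma rightInverse_adjoint_mem_frechetCoDeriv (hC : Function.RightInverse Cr C)
    (hw : w ∈ frechetCoDeriv (fun x => G (C x)) x y ξ) :
    (Cr†) w ∈ frechetCoDeriv G (C x) y ξ := by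
  have hderiv : HasFDerivAt (fun q : E' × F => (x + Cr (q.1 - C x), q.2))
      (Cr.prodMap (ContinuousLinearMap.id ℝ F)) (C x, y) :=
    ((Cr.hasFDerivAt.comp _ ((hasFDerivAt_fst (𝕜 := ℝ)).sub_const _)).const_add x).prodMk
      hasFDerivAt_snd
  refine mem_frechetCoDeriv_of_mapsTo hderiv (fun q hq => ?_) (by simpa using hw) fun q _ => ?_
  · change q.2 ∈ G (C (x + Cr (q.1 - C x)))
    rwa [map_add, hC (q.1 - C x), add_sub_cancel]
  · simp [ContinuousLinearMap.adjoint_inner_left]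

lemma adjoint_adjoint_eq_of_mem_frechetCoDeriv_comp (hC : Function.RightInverse Cr C)
    (hy : y ∈ G (C x)) (hw : w ∈ frechetCoDeriv (fun x => G (C x)) x y ξ) :
    (C†) ((Cr†) w) = w := by
  refine ext_inner_right ℝ fun e => ?_
  have hline := inner_eq_zero_of_mem_frechetNormalCone_of_line
    (h := WithLp.toLp 2 (e - Cr (C e), 0)) hw fun t => mem_l2Graph.2 (by simpa [hC (C e)] using hy)
  rw [WithLp.prod_inner_apply] at hline
  simp only [inner_zero_right, add_zero, inner_sub_right, sub_eq_zero] at hline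
  rw [ContinuousLinearMap.adjoint_inner_left, ContinuousLinearMap.adjoint_inner_left, hline]

lemma adjoint_adjoint_eq_of_mem_coDeriv_comp (hC : Function.RightInverse Cr C)
    (hw : w ∈ coDeriv (fun x => G (C x)) x y ξ) : (C†) ((Cr†) w) = w := by
  have hclosed : IsClosed {p : (E × F) × (F × E) | (C†) ((Cr†) p.2.2) = p.2.2} :=
    isClosed_eq (((C†).continuous.comp (Cr†).continuous).comp (continuous_snd.comp continuous_snd))
      (continuous_snd.comp continuous_snd)
  have hsub : frechetCoDerivGraph (fun x => G (C x)) ⊆ {p | (C†) ((Cr†) p.2.2) = p.2.2} :=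
    fun p hp => adjoint_adjoint_eq_of_mem_frechetCoDeriv_comp hC hp.1 hp.2
  exact (closure_minimal hsub hclosed (mem_coDeriv_iff_mem_closure.1 hw) :)

lemma mem_coDeriv_comp_iff (hC : Function.RightInverse Cr C) :
    w ∈ coDeriv (fun x => G (C x)) x y ξ ↔ ∃ u ∈ coDeriv G (C x) y ξ, (C†) u = w := by
  constructor
  · refine fun hw => ⟨(Cr†) w, ?_, adjoint_adjoint_eq_of_mem_coDeriv_comp hC hw⟩
    exact mem_coDeriv_of_eventually_mapsTo hw
      (fun p => ((C p.1.1, p.1.2), p.2.1, (Cr†) p.2.2)) (by fun_prop) rfl <|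
        Eventually.of_forall fun p hp => ⟨hp.1, rightInverse_adjoint_mem_frechetCoDeriv hC hp.2⟩
  · rintro ⟨u, hu, rfl⟩
    refine mem_coDeriv_of_eventually_mapsTo hu
      (fun p => ((x + Cr (p.1.1 - C x), p.1.2), p.2.1, (C†) p.2.2)) (by fun_prop) (by simp)
      (Eventually.of_forall fun p hp => ?_)
    have hCp : C (x + Cr (p.1.1 - C x)) = p.1.1 := by
      rw [map_add, hC (p.1.1 - C x), add_sub_cancel]
    refine ⟨?_, adjoint_mem_frechetCoDeriv_comp (by rw [hCp]; exact hp.2)⟩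
    change p.1.2 ∈ G (C (x + Cr (p.1.1 - C x)))
    rw [hCp]
    exact hp.1

end Precomposition

section Sum

open scoped InnerProduct

variable {E F : Type*} [NormedAddCommGroup E] [InnerProductSpace ℝ E] [CompleteSpace E]
  [NormedAddCommGroup F] [InnerProductSpace ℝ F] [CompleteSpace F]
  {f : E → F} {G : E → Set F} {x w : E} {y ξ : F}

lemma mem_frechetCoDeriv_add_iff (hf : DifferentiableAt ℝ f x) :
    w ∈ frechetCoDeriv (fun x => (f x + ·) '' G x) x (f x + y) ξ ↔
      w - ((fderiv ℝ f x)†) ξ ∈ frechetCoDeriv G x y ξ := by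
  have hderiv (y' : F) : HasFDerivAt (fun q : E × F => f q.1)
      (fderiv ℝ f x ∘L ContinuousLinearMap.fst ℝ E F) (x, y') :=
    HasFDerivAt.comp (g := f) (x, y') hf.hasFDerivAt hasFDerivAt_fst
  constructor <;> intro hw
  · refine mem_frechetCoDeriv_of_mapsTo (G' := fun x => (f x + ·) '' G x)
      (hasFDerivAt_fst.prodMk ((hderiv y).add hasFDerivAt_snd))
      (fun q hq => mem_image_of_mem _ hq) hw fun q _ => ?_
    simp only [ContinuousLinearMap.prod_apply, add_apply, ContinuousLinearMap.comp_apply,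
      ContinuousLinearMap.coe_fst', ContinuousLinearMap.coe_snd', Prod.fst_sub, Prod.snd_sub,
      inner_add_right, inner_sub_left, ContinuousLinearMap.adjoint_inner_left]
    ring
  · refine mem_frechetCoDeriv_of_mapsTo (u := w - ((fderiv ℝ f x)†) ξ) (ζ := ξ)
      (hasFDerivAt_fst.prodMk (hasFDerivAt_snd.fun_sub (hderiv (f x + y)))) ?_ (by simpa using hw)
      fun q _ => ?_
    · rintro ⟨x', _⟩ ⟨y', hy', (rfl : f x' + y' = _)⟩
      simpa [svGraph] using hy'
    · simp only [ContinuousLinearMap.prod_apply, sub_apply, ContinuousLinearMap.comp_apply,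
        ContinuousLinearMap.coe_fst', ContinuousLinearMap.coe_snd', Prod.fst_sub, Prod.snd_sub,
        inner_sub_right, inner_sub_left, map_sub, ContinuousLinearMap.adjoint_inner_left]
      ring

lemma mem_coDeriv_add_iff (hf : ContDiffAt ℝ 1 f x) :
    w ∈ coDeriv (fun x => (f x + ·) '' G x) x (f x + y) ξ ↔
      w - ((fderiv ℝ f x)†) ξ ∈ coDeriv G x y ξ := by
  have hdiff : ∀ᶠ x' in 𝓝 x, DifferentiableAt ℝ f x' :=
    (hf.eventually (by simp)).mono fun x' hx' => hx'.differentiableAt one_ne_zero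
  have hadj : ContinuousAt (fun x' => (fderiv ℝ f x')†) x :=
    ContinuousLinearMap.adjoint.continuous.continuousAt.comp (hf.continuousAt_fderiv one_ne_zero)
  have hfst (p : F × (F × E)) :
      Tendsto (fun q : (E × F) × (F × E) => q.1.1) (𝓝 ((x, p.1), p.2)) (𝓝 x) :=
    (continuous_fst.comp continuous_fst).tendsto _
  have hf_fst (p : F × (F × E)) :
      ContinuousAt (fun q : (E × F) × (F × E) => f q.1.1) ((x, p.1), p.2) :=
    hf.continuousAt.tendsto.comp (hfst p)
  have hadj_fst (p : F × (F × E)) : ContinuousAt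
      (fun q : (E × F) × (F × E) => ((fderiv ℝ f q.1.1)†) q.2.1) ((x, p.1), p.2) :=
    ContinuousAt.clm_apply (hadj.tendsto.comp (hfst p)) continuousAt_snd.fst
  constructor <;> intro hw
  · let p₀ := (f x + y, ξ, w)
    refine mem_coDeriv_of_eventually_mapsTo hw
      (fun p => ((p.1.1, p.1.2 - f p.1.1), p.2.1, p.2.2 - ((fderiv ℝ f p.1.1)†) p.2.1))
      ((continuousAt_fst.fst.prodMk (continuousAt_fst.snd.fun_sub (hf_fst p₀))).prodMk
        (continuousAt_snd.fst.prodMk (continuousAt_snd.snd.fun_sub (hadj_fst p₀)))) (by simp) ?_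
    filter_upwards [(hfst p₀).eventually hdiff]
    rintro ⟨⟨x', _⟩, ξ', w'⟩ hx' ⟨⟨y', hy', (rfl : f x' + y' = _)⟩, hw'⟩
    rw [add_sub_cancel_left]
    exact ⟨hy', (mem_frechetCoDeriv_add_iff hx').1 hw'⟩
  · let p₀ := (y, ξ, w - ((fderiv ℝ f x)†) ξ)
    refine mem_coDeriv_of_eventually_mapsTo hw
      (fun p => ((p.1.1, f p.1.1 + p.1.2), p.2.1, p.2.2 + ((fderiv ℝ f p.1.1)†) p.2.1))
      ((continuousAt_fst.fst.prodMk ((hf_fst p₀).fun_add continuousAt_fst.snd)).prodMk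
        (continuousAt_snd.fst.prodMk (continuousAt_snd.snd.fun_add (hadj_fst p₀)))) (by simp) ?_
    filter_upwards [(hfst p₀).eventually hdiff] with p hp hpG
    refine ⟨mem_image_of_mem _ hpG.1, (mem_frechetCoDeriv_add_iff hp).2 ?_⟩
    rw [add_sub_cancel_right]
    exact hpG.2

end Sum

section CoderivativeBound

variable {E F : Type*} [NormedAddCommGroup E] [InnerProductSpace ℝ E]
  [NormedAddCommGroup F] [InnerProductSpace ℝ F] {G : E → Set F} {x w : E} {y ξ : F} {κ : ℝ≥0}

/-- The uniform estimate `‖z‖ ≤ κ ‖w‖` for the elements `w ∈ D̂*G(x', y')(z)` of the Fréchet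
coderivatives of `G` at the points of its graph near `(x, y)`. It is the dual counterpart of the
Aubin property of the inverse of `G`. -/
def FrechetCoDerivBound (κ : ℝ≥0) (G : E → Set F) (x : E) (y : F) : Prop :=
  ∀ᶠ q in 𝓝 (x, y), q ∈ svGraph G → ∀ z, ∀ w ∈ frechetCoDeriv G q.1 q.2 z, ‖z‖ ≤ κ * ‖w‖

lemma eventually_inner_sub_inner_le_of_mem_frechetCoDeriv (hw : w ∈ frechetCoDeriv G x y ξ)
    {ε : ℝ} (hε : 0 < ε) : ∀ᶠ q in 𝓝 (x, y), q ∈ svGraph G →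
      ⟪w, q.1 - x⟫ - ⟪ξ, q.2 - y⟫ ≤ ε * (‖q.1 - x‖ + ‖q.2 - y‖) := by
  have hlim : Tendsto (WithLp.toLp 2) (𝓝[svGraph G] (x, y)) (𝓝[l2Graph G] (WithLp.toLp 2 (x, y))) :=
    ((WithLp.prod_continuous_toLp 2 E F).tendsto _).inf
      (tendsto_principal_principal.2 fun q hq => mem_l2Graph.2 hq)
  refine eventually_nhdsWithin_iff.1 ?_
  filter_upwards [hlim.eventually (mem_frechetNormalCone_iff_eventually.1 hw ε hε)] with q hq
  have hnorm : ‖WithLp.toLp 2 q - WithLp.toLp 2 (x, y)‖ ≤ ‖q.1 - x‖ + ‖q.2 - y‖ :=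
    calc ‖WithLp.toLp 2 q - WithLp.toLp 2 (x, y)‖
        = ‖WithLp.toLp 2 (q.1 - x, (0 : F)) + WithLp.toLp 2 ((0 : E), q.2 - y)‖ := by
          rw [← WithLp.toLp_sub, ← WithLp.toLp_add, Prod.mk_add_mk, add_zero, zero_add]
          rfl
      _ ≤ ‖q.1 - x‖ + ‖q.2 - y‖ := by
          simpa only [WithLp.norm_toLp_fst, WithLp.norm_toLp_snd] using norm_add_le
            (WithLp.toLp 2 (q.1 - x, (0 : F))) (WithLp.toLp 2 ((0 : E), q.2 - y))
  rw [WithLp.prod_inner_apply] at hq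
  calc ⟪w, q.1 - x⟫ - ⟪ξ, q.2 - y⟫ ≤ ε * ‖WithLp.toLp 2 q - WithLp.toLp 2 (x, y)‖ := by
        simpa [inner_neg_left, ← sub_eq_add_neg] using hq
    _ ≤ ε * (‖q.1 - x‖ + ‖q.2 - y‖) := by gcongr

/- Moving from `y` in the direction `-ξ` decreases `⟪ξ, ·⟫` at rate `‖ξ‖²`; the preimages follow
at speed at most `κ ‖ξ‖`, so `⟪w, ·⟫` cannot make up for it unless `‖ξ‖ ≤ κ ‖w‖`. -/
lemma norm_le_mul_norm_of_mem_frechetCoDeriv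
    (hG : ∀ᶠ y' in 𝓝 y, ∃ x', y' ∈ G x' ∧ ‖x - x'‖ ≤ κ * ‖y - y'‖)
    (hw : w ∈ frechetCoDeriv G x y ξ) : ‖ξ‖ ≤ κ * ‖w‖ := by
  rcases eq_or_ne ξ 0 with rfl | hξ
  · simpa using mul_nonneg κ.2 (norm_nonneg w)
  have hξ_pos : 0 < ‖ξ‖ := norm_pos_iff.2 hξ
  have hκ : (0 : ℝ) < κ + 1 := by positivity
  refine le_of_forall_pos_le_add fun η hη => ?_
  obtain ⟨δ, hδ, hball⟩ := Metric.eventually_nhds_iff.1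
    (eventually_inner_sub_inner_le_of_mem_frechetCoDeriv hw (div_pos hη hκ))
  have hpath : Tendsto (fun t : ℝ => y - t • ξ) (𝓝[>] 0) (𝓝 y) :=
    ((by fun_prop : Continuous fun t : ℝ => y - t • ξ).tendsto' 0 y (by simp)).mono_left
      nhdsWithin_le_nhds
  obtain ⟨t, ⟨x', hx', hdist⟩, ht, htδ⟩ := ((hpath.eventually hG).and
    (Ioo_mem_nhdsGT (show 0 < δ / ((κ + 1) * ‖ξ‖) by positivity))).exists
  have hnorm_y : ‖y - t • ξ - y‖ = t * ‖ξ‖ := by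
    rw [sub_sub_cancel_left, norm_neg, norm_smul, Real.norm_of_nonneg ht.le]
  have hnorm_x : ‖x' - x‖ ≤ κ * (t * ‖ξ‖) := by
    rwa [norm_sub_rev, norm_sub_rev y, hnorm_y] at hdist
  have hclose : dist (x', y - t • ξ) (x, y) < δ := by
    rw [lt_div_iff₀ (by positivity)] at htδ
    rw [Prod.dist_eq, max_lt_iff, dist_eq_norm, dist_eq_norm, hnorm_y]
    constructor <;> nlinarith [mul_pos ht hξ_pos, mul_nonneg κ.2 (mul_pos ht hξ_pos).le]
  have hinner_w : -(‖w‖ * (κ * (t * ‖ξ‖))) ≤ ⟪w, x' - x⟫ :=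
    neg_le.1 ((neg_le_abs _).trans ((abs_real_inner_le_norm _ _).trans (by gcongr)))
  have hinner_ξ : ⟪ξ, y - t • ξ - y⟫ = -(t * ‖ξ‖ * ‖ξ‖) := by
    rw [sub_sub_cancel_left, inner_neg_right, real_inner_smul_right,
      real_inner_self_eq_norm_mul_norm, mul_assoc]
  refine le_of_mul_le_mul_left ?_ (mul_pos ht hξ_pos)
  calc t * ‖ξ‖ * ‖ξ‖ ≤ ⟪w, x' - x⟫ - ⟪ξ, y - t • ξ - y⟫ + ‖w‖ * (κ * (t * ‖ξ‖)) := by linarith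
    _ ≤ η / (κ + 1) * (κ * (t * ‖ξ‖) + t * ‖ξ‖) + ‖w‖ * (κ * (t * ‖ξ‖)) := by
        grw [hball hclose hx', hnorm_x, hnorm_y]
    _ = t * ‖ξ‖ * (κ * ‖w‖ + η) := by field_simp; ring

lemma frechetCoDerivBound_of_aubinWith (h : AubinWith κ (svInv G) y x) :
    FrechetCoDerivBound κ G x y := by
  obtain ⟨V, hV, U, hU, haubin⟩ := h
  have hV' : ∀ᶠ q in 𝓝 (x, y), V ∈ 𝓝 q.2 :=
    (continuous_snd.tendsto _).eventually (eventually_mem_nhds_iff.2 hV)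
  have hU' : ∀ᶠ q in 𝓝 (x, y), q.1 ∈ U := (continuous_fst.tendsto _).eventually hU
  filter_upwards [hV', hU'] with q hqV hqU hq z w hw
  refine norm_le_mul_norm_of_mem_frechetCoDeriv ?_ hw
  filter_upwards [hqV] with y' hy'
  obtain ⟨x', hx', hdist⟩ := haubin y' hy' q.2 (mem_of_mem_nhds hqV) q.1 ⟨hq, hqU⟩
  exact ⟨x', hx', by rwa [norm_sub_rev q.2]⟩

lemma FrechetCoDerivBound.eq_zero_of_zero_mem_coDeriv (h : FrechetCoDerivBound κ G x y)
    (hξ : 0 ∈ coDeriv G x y ξ) : ξ = 0 := by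
  have hclosed : IsClosed {p : (E × F) × (F × E) | ‖p.2.1‖ ≤ κ * ‖p.2.2‖} :=
    isClosed_le (by fun_prop) (by fun_prop)
  have hmaps : ∀ᶠ p in 𝓝 ((x, y), ξ, (0 : E)), p ∈ frechetCoDerivGraph G →
      ‖p.2.1‖ ≤ κ * ‖p.2.2‖ :=
    ((continuous_fst.tendsto ((x, y), ξ, (0 : E))).eventually h).mono
      fun p hp hpG => hp hpG.1 _ _ hpG.2
  have := hclosed.closure_subset
    (mem_closure_of_eventually_mapsTo (mem_coDeriv_iff_mem_closure.1 hξ) continuousAt_id hmaps)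
  simpa using this

lemma exists_frechetCoDerivBound [FiniteDimensional ℝ F]
    (h : ∀ ξ, 0 ∈ coDeriv G x y ξ → ξ = 0) : ∃ κ, FrechetCoDerivBound κ G x y := by
  have hsphere : ∀ᶠ p : (E × F) × E in 𝓝 ((x, y), 0), ∀ ξ ∈ sphere (0 : F) 1,
      (p.1, ξ, p.2) ∉ frechetCoDerivGraph G := by
    refine (isCompact_sphere 0 1).eventually_forall_of_forall_eventually fun ξ hξ => ?_
    have hnot : ((x, y), ξ, 0) ∉ closure (frechetCoDerivGraph G) := fun hmem =>
      ne_of_mem_sphere hξ one_ne_zero (h ξ (mem_coDeriv_iff_mem_closure.2 hmem))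
    have hswap : Continuous fun p : ((E × F) × E) × F => (p.1.1, p.2, p.1.2) := by fun_prop
    filter_upwards [(hswap.tendsto (((x, y), 0), ξ)).eventually
      (isClosed_closure.isOpen_compl.mem_nhds hnot)] with p hp
    exact fun hpG => hp (subset_closure hpG)
  rw [nhds_prod_eq, eventually_prod_iff] at hsphere
  obtain ⟨P, hP, Q, hQ, hPQ⟩ := hsphere
  obtain ⟨δ, hδ, hball⟩ := Metric.eventually_nhds_iff.1 hQ
  refine ⟨⟨δ⁻¹, by positivity⟩, hP.mono fun q hq hqG z w hw => ?_⟩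
  by_contra! hlt
  have hz : 0 < ‖z‖ := (by positivity : 0 ≤ δ⁻¹ * ‖w‖).trans_lt hlt
  refine hPQ hq (hball (y := ‖z‖⁻¹ • w) ?_) (‖z‖⁻¹ • z) ?_
    ⟨hqG, smul_mem_frechetCoDeriv hw (inv_pos.2 hz)⟩
  · rw [dist_zero_right, norm_smul, norm_inv, norm_norm, inv_mul_lt_iff₀ hz, mul_comm]
    exact (inv_mul_lt_iff₀ hδ).1 hlt
  · rw [mem_sphere_zero_iff_norm, norm_smul, norm_inv, norm_norm, inv_mul_cancel₀ hz.ne']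

end CoderivativeBound

section LocallyClosed

variable {α β : Type*} [PseudoMetricSpace α] [PseudoMetricSpace β]

lemma locClosedAt_of_isClosed {s : Set α} (hs : IsClosed s) (a : α) : LocClosedAt s a :=
  ⟨1, one_pos, hs.inter isClosed_closedBall⟩

lemma LocClosedAt.inter_isClosed {s t : Set α} {a : α} (hs : LocClosedAt s a) (ht : IsClosed t) :
    LocClosedAt (s ∩ t) a := by
  obtain ⟨r, hr, hclosed⟩ := hs
  exact ⟨r, hr, inter_right_comm s t _ ▸ hclosed.inter ht⟩

lemma LocClosedAt.preimage {s : Set β} {g : α → β} {a : α} (hs : LocClosedAt s (g a))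
    (hg : ∀ᶠ x in 𝓝 a, ContinuousAt g x) : LocClosedAt (g ⁻¹' s) a := by
  obtain ⟨r, hr, hclosed⟩ := hs
  obtain ⟨ρ, hρ, hball⟩ := Metric.nhds_basis_closedBall.eventually_iff.1
    (hg.and (hg.self_of_nhds.eventually (closedBall_mem_nhds (g a) hr)))
  refine ⟨ρ, hρ, ?_⟩
  have hcont : ContinuousOn g (closedBall a ρ) := fun x hx => (hball hx).1.continuousWithinAt
  convert hcont.preimage_isClosed_of_isClosed isClosed_closedBall hclosed using 1
  ext x
  exact ⟨fun hx => ⟨hx.2, hx.1, (hball hx.2).2⟩, fun hx => ⟨hx.2.1, hx.1⟩⟩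

lemma LocClosedAt.exists_forall_isClosed_inter_closedBall {s : Set α} {a : α}
    (hs : LocClosedAt s a) : ∃ ρ > 0, ∀ x ∈ closedBall a ρ, IsClosed (s ∩ closedBall x ρ) := by
  obtain ⟨r, hr, hclosed⟩ := hs
  refine ⟨r / 2, half_pos hr, fun x hx => ?_⟩
  have hsub : closedBall x (r / 2) ⊆ closedBall a r :=
    closedBall_subset_closedBall' (by rw [mem_closedBall] at hx; linarith)
  rw [← inter_eq_self_of_subset_right hsub, ← inter_assoc]
  exact hclosed.inter isClosed_closedBall

lemma LocClosedAt.svGraph_comp {γ : Type*} [PseudoMetricSpace γ] {G : β → Set γ} {g : α → β}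
    {a : α} {c : γ} (hG : LocClosedAt (svGraph G) (g a, c)) (hg : Continuous g) :
    LocClosedAt (svGraph fun x => G (g x)) (a, c) := by
  have hcont : Continuous fun q : α × γ => (g q.1, q.2) := by fun_prop
  exact LocClosedAt.preimage (a := (a, c)) hG (.of_forall fun _ => hcont.continuousAt)

lemma LocClosedAt.svGraph_image {γ : Type*} [MetricSpace γ] {G : α → Set β} {b : β → γ}
    {bl : γ → β} {a : α} {c : β} (hG : LocClosedAt (svGraph G) (a, c)) (hb : Continuous b)
    (hbl : Continuous bl) (hinv : Function.LeftInverse bl b) :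
    LocClosedAt (svGraph fun x => b '' G x) (a, b c) := by
  have hcont : Continuous fun q : α × γ => (q.1, bl q.2) := by fun_prop
  have hrange : IsClosed {q : α × γ | b (bl q.2) = q.2} := isClosed_eq (by fun_prop) (by fun_prop)
  have heq : (svGraph fun x => b '' G x) =
      (fun q : α × γ => (q.1, bl q.2)) ⁻¹' svGraph G ∩ {q | b (bl q.2) = q.2} := by
    refine Subset.antisymm ?_ fun q hq => ⟨bl q.2, hq.1, hq.2⟩
    rintro ⟨x, _⟩ ⟨y, hy, rfl⟩
    exact ⟨show bl (b y) ∈ G x from (hinv y).symm ▸ hy, congrArg b (hinv y)⟩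
  rw [heq]
  exact LocClosedAt.inter_isClosed
    (.preimage (by rwa [hinv c]) (.of_forall fun _ => hcont.continuousAt)) hrange

lemma LocClosedAt.svGraph_add {V : Type*} [SeminormedAddCommGroup V] {G : α → Set V} {f : α → V}
    {a : α} {y : V} (hG : LocClosedAt (svGraph G) (a, y)) (hf : ∀ᶠ x in 𝓝 a, ContinuousAt f x) :
    LocClosedAt (svGraph fun x => (f x + ·) '' G x) (a, f a + y) := by
  have heq : (svGraph fun x => (f x + ·) '' G x) =
      (fun q : α × V => (q.1, q.2 - f q.1)) ⁻¹' svGraph G := by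
    ext ⟨x, w⟩
    simp [svGraph, neg_add_eq_sub]
  have hcont : ∀ᶠ q in 𝓝 (a, f a + y),
      ContinuousAt (fun q : α × V => (q.1, q.2 - f q.1)) q :=
    ((continuous_fst.tendsto _).eventually hf).mono fun q hq =>
      continuousAt_fst.prodMk (continuousAt_snd.sub (hq.comp continuousAt_fst))
  rw [heq]
  exact .preimage (by rwa [add_sub_cancel_left]) hcont

end LocallyClosed

/- The weight `ε ^ 2 / ψ p₀` keeps the minimiser within `ψ p₀ / ε` of `p₀`, hence in the interior of
the ball, and makes the gradient of the penalty there at most `2 * ε`. -/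
lemma exists_isLocalMinOn_add_dist_sq {α : Type*} [PseudoMetricSpace α] [ProperSpace α]
    {Ω : Set α} {ψ : α → ℝ} (hψ : Continuous ψ) (hψ_nonneg : ∀ q, 0 ≤ ψ q) {p₀ : α}
    (hp₀ : p₀ ∈ Ω) (hψp₀ : 0 < ψ p₀) {ε s : ℝ} (hε : 0 < ε)
    (hclosed : IsClosed (Ω ∩ closedBall p₀ s)) (hs : ψ p₀ / ε < s) :
    ∃ p ∈ Ω, dist p p₀ ≤ ψ p₀ / ε ∧
      IsLocalMinOn (fun q => ψ q + ε ^ 2 / ψ p₀ * dist q p₀ ^ 2) Ω p := by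
  let φ : α → ℝ := fun q => ψ q + ε ^ 2 / ψ p₀ * dist q p₀ ^ 2
  have hcompact : IsCompact (Ω ∩ closedBall p₀ s) :=
    (isCompact_closedBall p₀ s).of_isClosed_subset hclosed inter_subset_right
  have hs_nonneg : 0 ≤ s := (by positivity : 0 ≤ ψ p₀ / ε).trans hs.le
  obtain ⟨p, ⟨hpΩ, -⟩, hmin⟩ := hcompact.exists_isMinOn (f := φ)
    ⟨p₀, hp₀, mem_closedBall_self hs_nonneg⟩ (by fun_prop)
  have hpenalty : ε ^ 2 / ψ p₀ * dist p p₀ ^ 2 ≤ ψ p₀ :=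
    calc ε ^ 2 / ψ p₀ * dist p p₀ ^ 2 ≤ φ p := le_add_of_nonneg_left (hψ_nonneg p)
      _ ≤ φ p₀ := hmin ⟨hp₀, mem_closedBall_self hs_nonneg⟩
      _ = ψ p₀ := by simp [φ]
  have hp : dist p p₀ ≤ ψ p₀ / ε := by
    refine (sq_le_sq₀ dist_nonneg (by positivity)).1 ?_
    calc dist p p₀ ^ 2 = ψ p₀ / ε ^ 2 * (ε ^ 2 / ψ p₀ * dist p p₀ ^ 2) := by field_simp
      _ ≤ ψ p₀ / ε ^ 2 * ψ p₀ := by gcongr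
      _ = (ψ p₀ / ε) ^ 2 := by ring
  have hball : ∀ᶠ q in 𝓝[Ω] p, q ∈ closedBall p₀ s :=
    nhdsWithin_le_nhds (closedBall_mem_nhds_of_mem (mem_ball.2 (hp.trans_lt hs)))
  refine ⟨p, hpΩ, hp, ?_⟩
  filter_upwards [self_mem_nhdsWithin, hball] with q hqΩ hqs
  exact hmin ⟨hqΩ, hqs⟩

section Sufficiency

variable {E F : Type*} [NormedAddCommGroup E] [InnerProductSpace ℝ E]
  [NormedAddCommGroup F] [InnerProductSpace ℝ F] {G : E → Set F} {y : F}

lemma hasFDerivAt_norm_of_ne_zero {u : F} (hu : u ≠ 0) :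
    HasFDerivAt (‖·‖) (innerSL ℝ (‖u‖⁻¹ • u)) u := by
  have hsqrt := (hasStrictFDerivAt_norm_sq u).hasFDerivAt.sqrt
    (pow_ne_zero 2 (norm_ne_zero_iff.2 hu))
  simp only [Real.sqrt_sq (norm_nonneg _)] at hsqrt
  refine hsqrt.congr_fderiv (ContinuousLinearMap.ext fun v => ?_)
  simp only [one_div, mul_inv, nsmul_eq_mul, smul_apply, innerSL_apply_apply,
    real_inner_smul_left, smul_eq_mul, Nat.cast_ofNat]
  field_simp

lemma mem_frechetCoDeriv_of_isLocalMinOn {p p₀ : WithLp 2 (E × F)} {c : ℝ} (hy : p.snd ≠ y)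
    (hmin : IsLocalMinOn (fun q => ‖q.snd - y‖ + c * ‖q - p₀‖ ^ 2) (l2Graph G) p) :
    -((2 * c) • (p - p₀).fst) ∈ frechetCoDeriv G p.fst p.snd
      (‖p.snd - y‖⁻¹ • (p.snd - y) + (2 * c) • (p - p₀).snd) := by
  let g : WithLp 2 (E × F) := WithLp.toLp 2
    ((2 * c) • (p - p₀).fst, ‖p.snd - y‖⁻¹ • (p.snd - y) + (2 * c) • (p - p₀).snd)
  have hsnd : HasFDerivAt (fun q : WithLp 2 (E × F) => q.snd - y) (WithLp.sndL 2 ℝ E F) p :=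
    (WithLp.sndL 2 ℝ E F).hasFDerivAt.sub_const y
  have hderiv : HasFDerivAt (fun q => ‖q.snd - y‖ + c * ‖q - p₀‖ ^ 2) (innerSL ℝ g) p := by
    refine (((hasFDerivAt_norm_of_ne_zero (sub_ne_zero.2 hy)).comp p hsnd).add
      (((hasFDerivAt_id p).sub_const p₀).norm_sq.const_mul c)).congr_fderiv ?_
    refine ContinuousLinearMap.ext fun q => ?_
    simp only [map_smul, map_sub, ContinuousLinearMap.smul_comp, ContinuousLinearMap.sub_comp,
      id_eq, ContinuousLinearMap.comp_id, add_apply, smul_apply, sub_apply,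
      ContinuousLinearMap.comp_apply, WithLp.sndL_apply, coe_innerSL_apply, smul_eq_mul,
      WithLp.prod_inner_apply, WithLp.ofLp_fst, WithLp.ofLp_snd, nsmul_eq_mul, Nat.cast_ofNat,
      WithLp.sub_fst, WithLp.sub_snd, real_inner_smul_left, inner_sub_left, inner_add_left, g]
    ring
  exact neg_mem_frechetNormalCone_of_isLocalMinOn hmin hderiv

lemma exists_snd_eq_or_exists_mem_frechetCoDeriv [FiniteDimensional ℝ E] [FiniteDimensional ℝ F]
    {p₀ : WithLp 2 (E × F)} (hp₀ : p₀ ∈ l2Graph G) {ε s : ℝ} (hε : 0 < ε)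
    (hclosed : IsClosed (l2Graph G ∩ closedBall p₀ s)) (hs : ‖p₀.snd - y‖ / ε < s) :
    ∃ p ∈ l2Graph G, ‖p - p₀‖ ≤ ‖p₀.snd - y‖ / ε ∧
      (p.snd = y ∨ ∃ z, ∃ w ∈ frechetCoDeriv G p.fst p.snd z, ‖w‖ ≤ 2 * ε ∧ 1 - 2 * ε ≤ ‖z‖) := by
  rcases eq_or_ne p₀.snd y with hy₀ | hy₀
  · exact ⟨p₀, hp₀, by simp [hy₀], Or.inl hy₀⟩
  have hd : 0 < ‖p₀.snd - y‖ := norm_pos_iff.2 (sub_ne_zero.2 hy₀)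
  obtain ⟨p, hpG, hp, hmin⟩ := exists_isLocalMinOn_add_dist_sq
    (ψ := fun q : WithLp 2 (E × F) => ‖q.snd - y‖) (by fun_prop) (fun _ => norm_nonneg _)
    hp₀ hd hε hclosed hs
  simp only [dist_eq_norm] at hp hmin
  set c := ε ^ 2 / ‖p₀.snd - y‖ with hc
  have hshift : ‖(2 * c) • (p - p₀)‖ ≤ 2 * ε :=
    calc ‖(2 * c) • (p - p₀)‖ = 2 * c * ‖p - p₀‖ := by
          rw [norm_smul, Real.norm_of_nonneg (by positivity)]
      _ ≤ 2 * c * (‖p₀.snd - y‖ / ε) := by gcongr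
      _ = 2 * ε := by rw [hc]; field_simp
  refine ⟨p, hpG, hp, or_iff_not_imp_left.2 fun hpy =>
    ⟨_, _, mem_frechetCoDeriv_of_isLocalMinOn hpy hmin, ?_, ?_⟩⟩
  · rw [norm_neg]
    exact (WithLp.norm_fst_le _ ((2 * c) • (p - p₀))).trans hshift
  · have hunit : ‖‖p.snd - y‖⁻¹ • (p.snd - y)‖ = 1 := norm_smul_inv_norm (sub_ne_zero.2 hpy)
    have hsnd := (WithLp.norm_snd_le _ ((2 * c) • (p - p₀))).trans hshift
    calc 1 - 2 * ε ≤ ‖‖p.snd - y‖⁻¹ • (p.snd - y)‖ - ‖(2 * c) • (p - p₀).snd‖ := by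
          rw [hunit]; exact sub_le_sub_left hsnd 1
      _ ≤ _ := norm_sub_le_norm_add _ _

lemma exists_snd_eq_of_forall_norm_le_mul_norm [FiniteDimensional ℝ E] [FiniteDimensional ℝ F]
    {p₀ : WithLp 2 (E × F)} (hp₀ : p₀ ∈ l2Graph G) {κ : ℝ≥0} {s : ℝ}
    (hclosed : IsClosed (l2Graph G ∩ closedBall p₀ s)) (hs : (2 * κ + 3) * ‖p₀.snd - y‖ < s)
    (hbound : ∀ p ∈ l2Graph G ∩ closedBall p₀ s, ∀ z, ∀ w ∈ frechetCoDeriv G p.fst p.snd z,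
      ‖z‖ ≤ κ * ‖w‖) :
    ∃ p ∈ l2Graph G, p.snd = y ∧ ‖p - p₀‖ ≤ (2 * κ + 3) * ‖p₀.snd - y‖ := by
  have hκ : (0 : ℝ) < 2 * κ + 3 := by positivity
  have hdiv : ‖p₀.snd - y‖ / (2 * κ + 3 : ℝ)⁻¹ = (2 * κ + 3) * ‖p₀.snd - y‖ := by
    rw [div_inv_eq_mul, mul_comm]
  obtain ⟨p, hpG, hp, hpy | ⟨z, w, hw, hw_le, hz_ge⟩⟩ :=
    exists_snd_eq_or_exists_mem_frechetCoDeriv hp₀ (inv_pos.2 hκ) hclosed (hdiv ▸ hs)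
  · exact ⟨p, hpG, hpy, hdiv ▸ hp⟩
  · have hz_le : ‖z‖ ≤ κ * (2 * (2 * κ + 3 : ℝ)⁻¹) := by
      grw [hbound p ⟨hpG, mem_closedBall_iff_norm.2 ((hdiv ▸ hp).trans hs.le)⟩ z w hw, hw_le]
    have hlt : (2 * κ + 2) * (2 * κ + 3 : ℝ)⁻¹ < 1 := by
      rw [mul_inv_lt_iff₀ hκ]
      linarith
    linarith

lemma aubinWith_of_frechetCoDerivBound [FiniteDimensional ℝ E] [FiniteDimensional ℝ F] {x : E}
    {κ : ℝ≥0} (hclosed : LocClosedAt (svGraph G) (x, y)) (h : FrechetCoDerivBound κ G x y) :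
    AubinWith (2 * κ + 3) (svInv G) y x := by
  have hcont := WithLp.prod_continuous_ofLp 2 E F
  obtain ⟨ρ, hρ, hball⟩ := LocClosedAt.exists_forall_isClosed_inter_closedBall
    (hclosed.preimage (a := WithLp.toLp 2 (x, y)) (.of_forall fun _ => hcont.continuousAt))
  obtain ⟨r, hr, hbound⟩ := Metric.nhds_basis_closedBall.eventually_iff.1
    ((hcont.tendsto (WithLp.toLp 2 (x, y))).eventually h)
  obtain ⟨η, hη, hηρ, hηr⟩ : ∃ η > 0, η ≤ ρ ∧ η ≤ r / 2 :=
    ⟨min ρ (r / 2), lt_min hρ (half_pos hr), min_le_left _ _, min_le_right _ _⟩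
  have hnear : ∀ᶠ q in 𝓝 (x, y), WithLp.toLp 2 q ∈ closedBall (WithLp.toLp 2 (x, y)) η :=
    (WithLp.prod_continuous_toLp 2 E F).continuousAt.eventually (closedBall_mem_nhds _ hη)
  have hclose : ∀ᶠ q in 𝓝 (y, y), (2 * κ + 3) * ‖q.1 - q.2‖ < η :=
    (by fun_prop : Continuous fun q : F × F => (2 * (κ : ℝ) + 3) * ‖q.1 - q.2‖).tendsto' _ 0
      (by simp) |>.eventually_lt_const hη
  rw [nhds_prod_eq] at hnear hclose
  obtain ⟨P, hP, Q, hQ, hnear⟩ := eventually_prod_iff.1 hnear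
  obtain ⟨V, hV, hclose⟩ := eventually_prod_self_iff'.1 hclose
  refine ⟨V ∩ {y' | Q y'}, inter_mem hV hQ, {x' | P x'}, hP, ?_⟩
  rintro y₁ ⟨hy₁, -⟩ y₂ ⟨hy₂, hQ₂⟩ x' ⟨hx', hPx'⟩
  have hp₀ := mem_closedBall.1 (hnear hPx' hQ₂)
  have hclosed₀ : IsClosed (l2Graph G ∩ closedBall (WithLp.toLp 2 (x', y₂)) η) := by
    have := (hball _ (hp₀.trans hηρ)).inter
      (isClosed_closedBall (x := WithLp.toLp 2 (x', y₂)) (ε := η))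
    rwa [inter_assoc, inter_eq_self_of_subset_right (closedBall_subset_closedBall hηρ),
      ← l2Graph_eq_preimage] at this
  obtain ⟨p, hpG, rfl, hp⟩ := exists_snd_eq_of_forall_norm_le_mul_norm (mem_l2Graph.2 hx')
    hclosed₀ (hclose _ hy₂ _ hy₁) fun p hp => hbound
      (closedBall_subset_closedBall' (by linarith) hp.2) (mem_l2Graph.1 hp.1)
  refine ⟨p.fst, mem_l2Graph.1 hpG, ?_⟩
  rw [norm_sub_rev, norm_sub_rev p.snd]
  exact (WithLp.norm_fst_le _ (p - WithLp.toLp 2 (x', y₂))).trans hp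

end Sufficiency

section Criterion

open scoped InnerProduct

lemma rightInverse_adjoint_of_leftInverse_adjoint {E H : Type*} [NormedAddCommGroup E]
    [InnerProductSpace ℝ E] [CompleteSpace E] [NormedAddCommGroup H] [InnerProductSpace ℝ H]
    [CompleteSpace H] {C Cl : E →L[ℝ] H} (hC : Function.LeftInverse Cl (C†)) :
    Function.RightInverse (Cl†) C := by
  have hcomp : Cl ∘L (C†) = .id ℝ H := ContinuousLinearMap.ext hC
  have hadj : C ∘L (Cl†) = .id ℝ H := by
    rw [← ContinuousLinearMap.adjoint_adjoint C, ← ContinuousLinearMap.adjoint_comp, hcomp,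
      ContinuousLinearMap.adjoint_id]
  exact fun h => DFunLike.congr_fun hadj h

lemma exists_mem_add_eq_zero_iff_of_leftInverse {V W 𝓕 𝓖 : Type*} [AddCommGroup V]
    [AddCommGroup W] [FunLike 𝓕 V W] [AddMonoidHomClass 𝓕 V W] [FunLike 𝓖 W V]
    [AddMonoidHomClass 𝓖 W V] {T : 𝓕} {R : 𝓖} (hT : Function.LeftInverse R T) {s : Set V} {a : W} :
    (∃ u ∈ s, a + T u = 0) ↔ -R a ∈ s ∧ a ∈ range T := by
  constructor
  · rintro ⟨u, hu, h⟩
    obtain rfl : a = -T u := eq_neg_of_add_eq_zero_left h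
    exact ⟨by rwa [map_neg, hT u, neg_neg], -u, map_neg T u⟩
  · rintro ⟨hs, u, rfl⟩
    exact ⟨-u, hT u ▸ hs, by rw [map_neg, add_neg_cancel]⟩

variable {E F H K : Type*}
  [NormedAddCommGroup E] [InnerProductSpace ℝ E] [FiniteDimensional ℝ E]
  [NormedAddCommGroup F] [InnerProductSpace ℝ F] [FiniteDimensional ℝ F]

theorem exists_aubinWith_svInv_iff_coDeriv {G : E → Set F} {x : E} {y : F}
    (hclosed : LocClosedAt (svGraph G) (x, y)) :
    (∃ κ : ℝ≥0, AubinWith κ (svInv G) y x) ↔ ∀ ξ, 0 ∈ coDeriv G x y ξ → ξ = 0 :=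
  ⟨fun ⟨_, h⟩ _ => (frechetCoDerivBound_of_aubinWith h).eq_zero_of_zero_mem_coDeriv,
    fun h => (exists_frechetCoDerivBound h).imp' _ fun _ =>
      aubinWith_of_frechetCoDerivBound hclosed⟩

variable [NormedAddCommGroup H] [InnerProductSpace ℝ H] [CompleteSpace H]
  [NormedAddCommGroup K] [InnerProductSpace ℝ K] [CompleteSpace K]
  {f : E → F} {M : H → Set K} {B : K →L[ℝ] F} {Bl : F →L[ℝ] K} {C Cl : E →L[ℝ] H}
  {z : E} {v : K}

theorem exists_aubinWith_svInv_add_image_comp_iff (hf : ContDiffAt ℝ 1 f z)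
    (hB : Function.LeftInverse Bl B) (hC : Function.LeftInverse Cl (C†))
    (hM : LocClosedAt (svGraph M) (C z, v)) :
    (∃ κ : ℝ≥0, AubinWith κ (svInv fun x => {w | ∃ y ∈ M (C x), w = f x + B y})
      (f z + B v) z) ↔
      ∀ ξ, -Cl (((fderiv ℝ f z)†) ξ) ∈ coDeriv M (C z) v ((B†) ξ) ∧
        ((fderiv ℝ f z)†) ξ ∈ range (C†) → ξ = 0 := by
  have himage : (fun x => {w | ∃ y ∈ M (C x), w = f x + B y}) =
      fun x => (f x + ·) '' (B '' M (C x)) := by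
    funext x
    rw [image_image]
    simp only [image, eq_comm]
  have hcont : ∀ᶠ x in 𝓝 z, ContinuousAt f x :=
    (hf.eventually (by simp)).mono fun x hx => hx.continuousAt
  have hclosed := ((hM.svGraph_comp C.continuous).svGraph_image B.continuous Bl.continuous hB)
    |>.svGraph_add hcont
  rw [himage, exists_aubinWith_svInv_iff_coDeriv hclosed]
  refine forall_congr' fun ξ => imp_congr_left ?_
  rw [mem_coDeriv_add_iff hf, zero_sub, mem_coDeriv_image_iff hB,
    mem_coDeriv_comp_iff (rightInverse_adjoint_of_leftInverse_adjoint hC)]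
  simp only [eq_neg_iff_add_eq_zero, add_comm]
  exact exists_mem_add_eq_zero_iff_of_leftInverse hC

end Criterion

section EuclideanMatrix

variable {ι κ : Type*} [Fintype ι] [DecidableEq ι] [Fintype κ] [DecidableEq κ] {M : Matrix ι κ ℝ}

lemma leftInverse_toEuclideanLin_of_injective (hM : Function.Injective (Matrix.toEuclideanLin M)) :
    Function.LeftInverse (Matrix.toEuclideanLin ((M.transpose * M)⁻¹ * M.transpose))
      (Matrix.toEuclideanLin M) := by
  have hMx : Function.Injective M.mulVec := fun x y hxy =>
    congrArg WithLp.ofLp (@hM (WithLp.toLp 2 x) (WithLp.toLp 2 y) (congrArg (WithLp.toLp 2) hxy))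
  have hunit : IsUnit (M.transpose * M) := by
    have := (Matrix.PosDef.conjTranspose_mul_self M hMx).isUnit
    rwa [Matrix.conjTranspose_eq_transpose_of_trivial] at this
  intro x
  rw [← LinearMap.comp_apply, ← Matrix.toLpLin_mul, Matrix.mul_assoc,
    Matrix.nonsing_inv_mul _ ((Matrix.isUnit_iff_isUnit_det _).1 hunit), Matrix.toLpLin_one,
    LinearMap.id_apply]

lemma adjoint_toEuclideanLin_toContinuousLinearMap (M : Matrix ι κ ℝ) :
    ContinuousLinearMap.adjoint (Matrix.toEuclideanLin M).toContinuousLinearMap =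
      (Matrix.toEuclideanLin M.transpose).toContinuousLinearMap := by
  rw [← LinearMap.adjoint_toContinuousLinearMap, ← Matrix.toEuclideanLin_conjTranspose_eq_adjoint,
    Matrix.conjTranspose_eq_transpose_of_trivial]

lemma toEuclideanLin_transpose_injective_of_surjective
    (hM : Function.Surjective (Matrix.toEuclideanLin M)) :
    Function.Injective (Matrix.toEuclideanLin M.transpose) := by
  rw [← LinearMap.ker_eq_bot, ← Matrix.conjTranspose_eq_transpose_of_trivial,
    Matrix.toEuclideanLin_conjTranspose_eq_adjoint, ← LinearMap.orthogonal_range,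
    LinearMap.range_eq_top.2 hM, Submodule.top_orthogonal_eq_bot]

end EuclideanMatrix

section MatrixCriterion

variable {ι ι' μ ν : Type*} [Fintype ι] [DecidableEq ι] [Fintype ι'] [DecidableEq ι']
  [Fintype μ] [DecidableEq μ] [Fintype ν] [DecidableEq ν]

theorem aubin_criterion_for_GE_surjective_C_general
    (f : EuclideanSpace ℝ ι → EuclideanSpace ℝ ι')
    (Fm : EuclideanSpace ℝ μ → Set (EuclideanSpace ℝ ν))
    (B : Matrix ι' ν ℝ) (hB : Function.Injective (Matrix.toEuclideanLin B))
    (C : Matrix μ ι ℝ) (hC : Function.Surjective (Matrix.toEuclideanLin C))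
    (Phi : EuclideanSpace ℝ ι → Set (EuclideanSpace ℝ ι'))
    (hPhi : Phi = fun z =>
      {w | ∃ v ∈ Fm (Matrix.toEuclideanLin C z), w = f z + Matrix.toEuclideanLin B v})
    (zbar : EuclideanSpace ℝ ι) (pbar : EuclideanSpace ℝ ι') (hzp : pbar ∈ Phi zbar)
    (vbar : EuclideanSpace ℝ ν)
    (hvbar : vbar = Matrix.toEuclideanLin ((B.transpose * B)⁻¹ * B.transpose) (pbar - f zbar))
    (hf : ContDiffAt ℝ 1 f zbar)
    (hFm : LocClosedAt (svGraph Fm) (Matrix.toEuclideanLin C zbar, vbar)) :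
    (∃ κ : ℝ≥0, AubinWith κ (svInv Phi) pbar zbar) ↔
      ∀ ξ : EuclideanSpace ℝ ι',
        ((WithLp.equiv 2 (EuclideanSpace ℝ μ × EuclideanSpace ℝ ν)).symm
            (Matrix.toEuclideanLin ((C * C.transpose)⁻¹ * C)
              (ContinuousLinearMap.adjoint (fderiv ℝ f zbar) ξ),
             Matrix.toEuclideanLin B.transpose ξ) ∈
          -limitingNormalCone
            ((WithLp.equiv 2 (EuclideanSpace ℝ μ × EuclideanSpace ℝ ν)).symm '' svGraph Fm)
            ((WithLp.equiv 2 (EuclideanSpace ℝ μ × EuclideanSpace ℝ ν)).symm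
              (Matrix.toEuclideanLin C zbar, vbar)) ∧
          ContinuousLinearMap.adjoint (fderiv ℝ f zbar) ξ ∈
            Set.range (fun w => Matrix.toEuclideanLin C.transpose w)) → ξ = 0 := by
  have hBl := leftInverse_toEuclideanLin_of_injective hB
  have hCl := leftInverse_toEuclideanLin_of_injective
    (toEuclideanLin_transpose_injective_of_surjective hC)
  rw [Matrix.transpose_transpose] at hCl
  obtain rfl : pbar = f zbar + Matrix.toEuclideanLin B vbar := by
    obtain ⟨v, -, rfl⟩ : ∃ v ∈ _, pbar = f zbar + _ := hPhi ▸ hzp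
    rw [hvbar, add_sub_cancel_left, hBl v]
  have hcriterion := exists_aubinWith_svInv_add_image_comp_iff (v := vbar)
    (B := (Matrix.toEuclideanLin B).toContinuousLinearMap)
    (Bl := (Matrix.toEuclideanLin ((B.transpose * B)⁻¹ * B.transpose)).toContinuousLinearMap)
    (C := (Matrix.toEuclideanLin C).toContinuousLinearMap)
    (Cl := (Matrix.toEuclideanLin ((C * C.transpose)⁻¹ * C)).toContinuousLinearMap)
    hf hBl (by rwa [adjoint_toEuclideanLin_toContinuousLinearMap]) hFm
  rw [adjoint_toEuclideanLin_toContinuousLinearMap, adjoint_toEuclideanLin_toContinuousLinearMap]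
    at hcriterion
  rw [hPhi]
  exact hcriterion

end MatrixCriterion

/-- Aubin property criterion for the solution mapping of `f(z) + B F(Cz) ∋ p`
when `C` is surjective, in terms of the limiting normal cone to the graph of `F`. -/
theorem aubin_criterion_for_GE_surjective_C {n m : ℕ}
    (f : EuclideanSpace ℝ (Fin n) → EuclideanSpace ℝ (Fin n)) (hf : ContDiff ℝ 1 f)
    (Fm : EuclideanSpace ℝ (Fin m) → Set (EuclideanSpace ℝ (Fin m)))
    (hFm : IsClosed (svGraph Fm))
    (B : Matrix (Fin n) (Fin m) ℝ) (hB : Function.Injective (Matrix.toEuclideanLin B))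
    (C : Matrix (Fin m) (Fin n) ℝ) (hC : Function.Surjective (Matrix.toEuclideanLin C))
    (Phi : EuclideanSpace ℝ (Fin n) → Set (EuclideanSpace ℝ (Fin n)))
    (hPhi : Phi = fun z =>
      {w | ∃ v ∈ Fm (Matrix.toEuclideanLin C z), w = f z + Matrix.toEuclideanLin B v})
    (zbar pbar : EuclideanSpace ℝ (Fin n)) (hzp : pbar ∈ Phi zbar)
    (vbar : EuclideanSpace ℝ (Fin m))
    (hvbar : vbar = Matrix.toEuclideanLin ((B.transpose * B)⁻¹ * B.transpose) (pbar - f zbar)) :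
    (∃ κ : ℝ≥0, AubinWith κ (svInv Phi) pbar zbar) ↔
      ∀ ξ : EuclideanSpace ℝ (Fin n),
        ((WithLp.equiv 2 (EuclideanSpace ℝ (Fin m) × EuclideanSpace ℝ (Fin m))).symm
            (Matrix.toEuclideanLin ((C * C.transpose)⁻¹ * C)
              (ContinuousLinearMap.adjoint (fderiv ℝ f zbar) ξ),
             Matrix.toEuclideanLin B.transpose ξ) ∈
          -limitingNormalCone
            ((WithLp.equiv 2 (EuclideanSpace ℝ (Fin m) × EuclideanSpace ℝ (Fin m))).symm ''
              svGraph Fm)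
            ((WithLp.equiv 2 (EuclideanSpace ℝ (Fin m) × EuclideanSpace ℝ (Fin m))).symm
              (Matrix.toEuclideanLin C zbar, vbar)) ∧
          ContinuousLinearMap.adjoint (fderiv ℝ f zbar) ξ ∈
            Set.range (fun w => Matrix.toEuclideanLin C.transpose w)) → ξ = 0 :=
  aubin_criterion_for_GE_surjective_C_general f Fm B hB C hC Phi hPhi zbar pbar hzp vbar hvbar
    hf.contDiffAt (locClosedAt_of_isClosed hFm _)

end
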